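/- For every J⊂K with U_J≠∅ one has X_{fJ}≠∅; the set X_f is nonempty and is a continuously differentiable submanifold of codimension n in C^1_n; and for every φ∈X_f the tangent space is T_φX_f = { χ∈C^1_n : for every μ∈{1,…,n}, (χ_μ)'(0) = Σ_{k=1}^{𝐤} Σ_{ν=1}^{n} ∂_{(k-1)n+ν} g_μ(φ̂) [ χ_ν(−d_k(Lφ)) − φ_ν'(−d_k(Lφ)) · Dd_k(Lφ)Lχ ] }. -/

import Mathlib

open Set

noncomputable section

/-- The compact interval `[-r,0]`. -/
abbrev Icc0 (r : ℝ) : Set ℝ := Set.Icc (-r) 0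

/-- Extension of a continuous map on `[-r,0]` to `ℝ`, by the value `0` outside. -/
def extFun {r : ℝ} {E : Type*} [TopologicalSpace E] [Zero E] (φ : C(Icc0 r, E)) : ℝ → E :=
  fun t => if h : t ∈ Icc0 r then φ ⟨t, h⟩ else 0

section extlemmas

variable {r : ℝ} {E : Type*} [NormedAddCommGroup E] [NormedSpace ℝ E]

lemma extFun_add (φ ψ : C(Icc0 r, E)) : extFun (φ + ψ) = extFun φ + extFun ψ := by
  funext t; by_cases h : t ∈ Icc0 r <;> simp [extFun, h]

lemma extFun_zero : extFun (0 : C(Icc0 r, E)) = 0 := by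
  funext t; by_cases h : t ∈ Icc0 r <;> simp [extFun, h]

lemma extFun_smul (c : ℝ) (φ : C(Icc0 r, E)) : extFun (c • φ) = c • extFun φ := by
  funext t; by_cases h : t ∈ Icc0 r <;> simp [extFun, h]

end extlemmas

/-- The space `C¹([-r,0],E)`, realized as the closed subspace of pairs `(φ, φ')` in
`C([-r,0],E) × C([-r,0],E)` such that `φ` is differentiable on `[-r,0]` with derivative `φ'`. -/
def C1sub (r : ℝ) (E : Type*) [NormedAddCommGroup E] [NormedSpace ℝ E] :
    Submodule ℝ (C(Icc0 r, E) × C(Icc0 r, E)) where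
  carrier := {p | ∀ t ∈ Icc0 r, HasDerivWithinAt (extFun p.1) (extFun p.2 t) (Icc0 r) t}
  add_mem' := by
    intro p q hp hq t ht
    have h := (hp t ht).add (hq t ht)
    have e1 : extFun (p + q).1 = fun s => extFun p.1 s + extFun q.1 s := by
      simp [Prod.fst_add, extFun_add]; rfl
    have e2 : extFun (p + q).2 t = extFun p.2 t + extFun q.2 t := by
      simp [Prod.snd_add, extFun_add]
    rw [e1, e2]; exact h
  zero_mem' := by
    intro t ht
    have e1 : extFun (0 : C(Icc0 r, E) × C(Icc0 r, E)).1 = fun _ : ℝ => (0 : E) := by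
      simp [extFun_zero]; rfl
    have e2 : extFun (0 : C(Icc0 r, E) × C(Icc0 r, E)).2 t = 0 := by
      simp [extFun_zero]
    rw [e1, e2]; exact hasDerivWithinAt_const _ _ _
  smul_mem' := by
    intro c p hp t ht
    have h := (hp t ht).const_smul c
    have e1 : extFun (c • p).1 = fun s => c • extFun p.1 s := by
      simp [Prod.smul_fst, extFun_smul]; rfl
    have e2 : extFun (c • p).2 t = c • extFun p.2 t := by
      simp [Prod.smul_snd, extFun_smul]
    rw [e1, e2]; exact h

/-- The Banach space `C¹([-r,0],E)`. -/
abbrev C1 (r : ℝ) (E : Type*) [NormedAddCommGroup E] [NormedSpace ℝ E] := ↥(C1sub r E)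

section C1ops

variable {r : ℝ} {E : Type*} [NormedAddCommGroup E] [NormedSpace ℝ E]

/-- Evaluation `φ(t)` of `φ ∈ C¹([-r,0],E)` (extended by `0` outside `[-r,0]`). -/
def evC (φ : C1 r E) (t : ℝ) : E := extFun φ.1.1 t

/-- Evaluation `φ'(t)` of the derivative of `φ ∈ C¹([-r,0],E)`. -/
def dvC (φ : C1 r E) (t : ℝ) : E := extFun φ.1.2 t

end C1ops

/-- The continuous linear map `ℝ → (Fin n → ℝ)` sending `x` to the vector `x·e_ν`. -/
def sCLM (n : ℕ) (ν : Fin n) : ℝ →L[ℝ] (Fin n → ℝ) :=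
  ContinuousLinearMap.pi (fun j => if j = ν then ContinuousLinearMap.id ℝ ℝ else 0)

/-- `ψ · e_ν` for a continuous map `ψ`. -/
def CMsingle {r : ℝ} {n : ℕ} (ν : Fin n) (φ : C(Icc0 r, ℝ)) : C(Icc0 r, Fin n → ℝ) :=
  ⟨fun t => sCLM n ν (φ t), (sCLM n ν).continuous.comp φ.continuous⟩

lemma extFun_CMsingle {r : ℝ} {n : ℕ} (ν : Fin n) (φ : C(Icc0 r, ℝ)) (t : ℝ) :
    extFun (CMsingle ν φ) t = sCLM n ν (extFun φ t) := by
  by_cases h : t ∈ Icc0 r <;> simp [extFun, CMsingle, h]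

/-- `ψ · e_ν ∈ C¹([-r,0],ℝⁿ)` for a scalar function `ψ ∈ C¹([-r,0],ℝ)`. -/
def singleC1 {r : ℝ} {n : ℕ} (ν : Fin n) (φ : C1 r ℝ) : C1 r (Fin n → ℝ) :=
  ⟨(CMsingle ν φ.1.1, CMsingle ν φ.1.2), by
    intro t ht
    have h := ((sCLM n ν).hasFDerivAt).comp_hasDerivWithinAt t (φ.2 t ht)
    have e1 : extFun (CMsingle ν φ.1.1) = (sCLM n ν) ∘ (extFun φ.1.1) := by
      funext s; exact extFun_CMsingle ν φ.1.1 s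
    rw [show (CMsingle ν φ.1.1, CMsingle ν φ.1.2).1 = CMsingle ν φ.1.1 from rfl,
      show (CMsingle ν φ.1.1, CMsingle ν φ.1.2).2 = CMsingle ν φ.1.2 from rfl,
      e1, extFun_CMsingle]
    exact h⟩

/-- The linear map `ℝⁿ → C¹([-r,0],ℝⁿ)`, `x ↦ Σ_ν x_ν ψ_ν · e_ν` (the map `Y·x`). -/
def Ymap {r : ℝ} {n : ℕ} (ψ : Fin n → C1 r ℝ) : (Fin n → ℝ) →ₗ[ℝ] C1 r (Fin n → ℝ) where
  toFun x := ∑ ν, x ν • singleC1 ν (ψ ν)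
  map_add' x y := by simp [add_smul, Finset.sum_add_distrib]
  map_smul' c x := by simp [smul_smul, Finset.smul_sum]

/-- The closed subspace `X₀ = {φ ∈ C¹ : φ'(0) = 0}`. -/
def X0sub (r : ℝ) (n : ℕ) : Submodule ℝ (C1 r (Fin n → ℝ)) where
  carrier := {φ | dvC φ 0 = 0}
  add_mem' := by
    intro φ ψ hφ hψ
    have : dvC (φ + ψ) 0 = dvC φ 0 + dvC ψ 0 := by
      simp [dvC, extFun_add]
    rw [Set.mem_setOf_eq] at *
    rw [this, hφ, hψ, add_zero]
  zero_mem' := by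
    show dvC (0 : C1 r (Fin n → ℝ)) 0 = 0
    simp [dvC, extFun_zero]
  smul_mem' := by
    intro c φ hφ
    have : dvC (c • φ) 0 = c • dvC φ 0 := by simp [dvC, extFun_smul]
    rw [Set.mem_setOf_eq] at *
    rw [this, hφ, smul_zero]

/-- The projection-like map `R φ = φ − Y·φ'(0)`. -/
def RKmap {r : ℝ} {n : ℕ} (ψ : Fin n → C1 r ℝ) (φ : C1 r (Fin n → ℝ)) : C1 r (Fin n → ℝ) :=
  φ - Ymap ψ (dvC φ 0)

section diffeos

variable {E : Type*} [NormedAddCommGroup E] [NormedSpace ℝ E]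
variable {E' : Type*} [NormedAddCommGroup E'] [NormedSpace ℝ E']

/-- `f` defines a `C¹`-diffeomorphism from `s` onto `t`: `f` is continuously differentiable
on `s`, injective on `s`, maps `s` onto `t`, and has a continuously differentiable inverse. -/
def IsC1DiffeoOn (f : E → E') (s : Set E) (t : Set E') : Prop :=
  ContDiffOn ℝ 1 f s ∧ Set.InjOn f s ∧ f '' s = t ∧
    ∃ g : E' → E, ContDiffOn ℝ 1 g t ∧ Set.InvOn g f s t

/-- The tangent cone of `X ⊆ E` at `x`: all velocities `c'(0)` of continuously differentiable
curves in `X` through `x`. -/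
def tangentSet (X : Set E) (x : E) : Set E :=
  {v | ∃ (c : ℝ → E) (ε : ℝ), 0 < ε ∧ ContDiffOn ℝ 1 c (Set.Ioo (-ε) ε) ∧
      (∀ s ∈ Set.Ioo (-ε) ε, c s ∈ X) ∧ c 0 = x ∧ HasDerivWithinAt c v (Set.Ioo (-ε) ε) 0}

/-- `X` is a continuously differentiable submanifold of codimension `m` of `E`. -/
def IsC1SubmanifoldCodim (X : Set E) (m : ℕ) : Prop :=
  ∀ x ∈ X, ∃ (O : Set E) (Φ : E → E) (H Q : Submodule ℝ E),
    IsOpen O ∧ x ∈ O ∧ IsClosed (H : Set E) ∧ IsCompl H Q ∧ Module.finrank ℝ Q = m ∧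
    IsOpen (Φ '' O) ∧ IsC1DiffeoOn Φ O (Φ '' O) ∧ Φ '' (X ∩ O) = (H : Set E) ∩ (Φ '' O)

/-- `X` is a continuously differentiable submanifold of `E`. -/
def IsC1Submanifold (X : Set E) : Prop :=
  ∀ x ∈ X, ∃ (O : Set E) (Φ : E → E) (H : Submodule ℝ E),
    IsOpen O ∧ x ∈ O ∧ IsClosed (H : Set E) ∧
    IsOpen (Φ '' O) ∧ IsC1DiffeoOn Φ O (Φ '' O) ∧ Φ '' (X ∩ O) = (H : Set E) ∩ (Φ '' O)

/-- `A` is an almost graph over `H`. -/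
def IsAlmostGraphOver (A : Set E) (H : Set E) : Prop :=
  ∃ (dm : Set E) (α : E → E), dm ⊆ H ∧ ContDiffOn ℝ 1 α dm ∧
    (∀ ζ ∈ dm ∩ A, α ζ = 0) ∧ (∀ ζ ∈ dm \ A, α ζ ∉ H) ∧
    IsC1DiffeoOn (fun ζ => ζ + α ζ) dm A

end diffeos

/-- The data of the delay differential system
`x'(t) = g(x(t-d_1(Lx_t)),…,x(t-d_kk(Lx_t)))`. -/
structure Setting (r : ℝ) (n kk : ℕ) (F : Type*) [NormedAddCommGroup F] [NormedSpace ℝ F] where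
  /-- The continuous linear map `L : C([-r,0],ℝⁿ) → F`. -/
  L : C(Icc0 r, Fin n → ℝ) →L[ℝ] F
  /-- The open set `W ⊆ F`. -/
  W : Set F
  Wopen : IsOpen W
  /-- The delay functions `d_k : W → [0,r]`. -/
  d : Fin kk → F → ℝ
  d_smooth : ∀ k, ContDiffOn ℝ 1 (d k) W
  d_mem : ∀ k, ∀ w ∈ W, d k w ∈ Set.Icc (0:ℝ) r
  /-- The open set `V ⊆ (ℝⁿ)^kk`. -/
  V : Set (Fin kk → Fin n → ℝ)
  Vopen : IsOpen V
  /-- The right hand side function `g : V → ℝⁿ`. -/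
  g : (Fin kk → Fin n → ℝ) → Fin n → ℝ
  g_smooth : ContDiffOn ℝ 1 g V

namespace Setting

variable {r : ℝ} {n kk : ℕ} {F : Type*} [NormedAddCommGroup F] [NormedSpace ℝ F]
variable (S : Setting r n kk F)

/-- `L` applied to (the `C⁰`-part of) `φ ∈ C¹`. -/
def Lof (φ : C1 r (Fin n → ℝ)) : F := S.L φ.1.1

/-- `φ̂ = (φ(-d_1(Lφ)),…,φ(-d_kk(Lφ)))`. -/
def hat (φ : C1 r (Fin n → ℝ)) : Fin kk → Fin n → ℝ := fun k => evC φ (-(S.d k (S.Lof φ)))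

/-- The domain `U = {φ ∈ C¹ : Lφ ∈ W, φ̂ ∈ V}`. -/
def U : Set (C1 r (Fin n → ℝ)) := {φ | S.Lof φ ∈ S.W ∧ S.hat φ ∈ S.V}

/-- The right hand side `f(φ) = g(φ̂)`. -/
def fmap (φ : C1 r (Fin n → ℝ)) : Fin n → ℝ := S.g (S.hat φ)

/-- The solution manifold `X_f = {φ ∈ U : φ'(0) = f(φ)}`. -/
def Xf : Set (C1 r (Fin n → ℝ)) := {φ | φ ∈ S.U ∧ dvC φ 0 = S.fmap φ}

/-- `W_J = {w ∈ W : d_j(w)=0 for j∈J, d_k(w)>0 for k∉J}`. -/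
def WJ (J : Finset (Fin kk)) : Set F :=
  {w | w ∈ S.W ∧ (∀ j ∈ J, S.d j w = 0) ∧ ∀ k ∉ J, 0 < S.d k w}

/-- `W^J = {w ∈ W : d_k(w)>0 for k∉J}`. -/
def WupJ (J : Finset (Fin kk)) : Set F :=
  {w | w ∈ S.W ∧ ∀ k ∉ J, 0 < S.d k w}

/-- `U_J = U ∩ L⁻¹(W_J)`. -/
def UJ (J : Finset (Fin kk)) : Set (C1 r (Fin n → ℝ)) := {φ | φ ∈ S.U ∧ S.Lof φ ∈ S.WJ J}

/-- `U^J = U ∩ L⁻¹(W^J)`. -/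
def UupJ (J : Finset (Fin kk)) : Set (C1 r (Fin n → ℝ)) := {φ | φ ∈ S.U ∧ S.Lof φ ∈ S.WupJ J}

/-- `X_{fJ} = X_f ∩ U_J`. -/
def XfJ (J : Finset (Fin kk)) : Set (C1 r (Fin n → ℝ)) := S.Xf ∩ S.UJ J

/-- Hypothesis (b): `g` is bounded. -/
def HypB : Prop := ∃ M, ∀ v ∈ S.V, ‖S.g v‖ ≤ M

/-- Hypothesis (d1b): `d₁ = 0` on `W` and `g` is bounded on subsets of `V` with bounded
first component. -/
def HypD1B (hk : 0 < kk) : Prop :=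
  (∀ w ∈ S.W, S.d ⟨0, hk⟩ w = 0) ∧
  ∀ B : Set (Fin n → ℝ), Bornology.IsBounded B →
    Bornology.IsBounded (S.g '' {v | v ∈ S.V ∧ v ⟨0, hk⟩ ∈ B})

/-- The partial derivative `∂_{(k-1)n+ν} g_μ (φ̂)`. -/
def dgCoeff (φ : C1 r (Fin n → ℝ)) (k : Fin kk) (ν : Fin n) (μ : Fin n) : ℝ :=
  fderivWithin ℝ S.g S.V (S.hat φ) (Pi.single k (Pi.single ν 1)) μ

/-- The right hand side of the formula for `Df_μ(φ)χ`. -/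
def dFormula (φ χ : C1 r (Fin n → ℝ)) (μ : Fin n) : ℝ :=
  ∑ k, ∑ ν, S.dgCoeff φ k ν μ *
    (evC χ (-(S.d k (S.Lof φ))) ν -
      dvC φ (-(S.d k (S.Lof φ))) ν * fderivWithin ℝ (S.d k) S.W (S.Lof φ) (S.Lof χ))

/-- The map `R^J(φ) = φ − Y_J(Lφ)·φ'(0)` of Section 4 of the paper. -/
def RJmap (y : Fin n → F → C1 r ℝ) (φ : C1 r (Fin n → ℝ)) : C1 r (Fin n → ℝ) :=
  φ - Ymap (fun ν => y ν (S.Lof φ)) (dvC φ 0)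

end Setting


variable {r : ℝ} {n kk : ℕ} {F : Type*} [NormedAddCommGroup F] [NormedSpace ℝ F]
  [FiniteDimensional ℝ F]

/-!
On the open set `U`, the solution manifold `X_f` is the zero set of `φ ↦ φ'(0) - g(φ̂)`. Reading
`φ(t)` as `φ(0) + ∫₀ᵗ φ'` extends evaluation `(φ, t) ↦ φ(t)` to a continuously differentiable map on
`C¹ × ℝ`, so the defining map is continuously differentiable even where a delay is `0` or `r`.

The number `φ'(0)` is not controlled by finitely many functionals that are continuous in the
`C⁰`-norm: given `w ∈ W` and `v ∈ ℝⁿ`, there is `χ ∈ C¹` with `Lχ = 0`, `χ(-d_k(w)) = 0` for all `k`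
and `χ'(0) = v`. With `w = Lφ`, adding such a `χ` to `φ ∈ U` changes neither `Lφ` nor `φ̂`, so
it can move `φ` into `X_f` within `U_J`. The same `χ` shows that the derivative of the defining map
is onto `ℝⁿ`, and the implicit function theorem gives the manifold and its tangent spaces.
-/

section ZeroSet

open Topology

variable {E : Type*} [NormedAddCommGroup E] [NormedSpace ℝ E]
variable {Y : Type*} [NormedAddCommGroup Y] [NormedSpace ℝ Y]
variable {U : Set E} {h : E → Y} {x : E}

lemma tangentSet_subset_ker {X : Set E} {h' : E →L[ℝ] Y} (hh : HasFDerivAt h h' x)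
    (hX : ∀ y ∈ X, h y = 0) : tangentSet X x ⊆ {v | h' v = 0} := by
  rintro v ⟨c, ε, hε, -, hcX, rfl, hcv⟩
  have hmem : Ioo (-ε) ε ∈ 𝓝 (0 : ℝ) := Ioo_mem_nhds (neg_neg_of_pos hε) hε
  have hchain : HasDerivAt (h ∘ c) (h' v) 0 := hh.comp_hasDerivAt 0 (hcv.hasDerivAt hmem)
  have hconst : HasDerivAt (h ∘ c) 0 0 :=
    (hasDerivAt_const (0 : ℝ) (0 : Y)).congr_of_eventuallyEq
      (Filter.eventually_of_mem hmem fun t ht => hX _ (hcX t ht))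
  exact hchain.unique hconst

variable [CompleteSpace E]

-- The chart is `y ↦ y + s (h y - Dh(x) y)`, with `s` a right inverse of `Dh(x)`.
lemma exists_chart_fderiv_comp_eq (hU : IsOpen U) (hh : ContDiffOn ℝ 1 h U) (hx : x ∈ U)
    (hsub : (fderiv ℝ h x).HasRightInverse) :
    ∃ e : OpenPartialHomeomorph E E, x ∈ e.source ∧ e.source ⊆ U ∧
      ContDiffOn ℝ 1 e e.source ∧ ContDiffOn ℝ 1 e.symm e.target ∧
      HasFDerivAt e.symm (.id ℝ E) (e x) ∧ ∀ y, fderiv ℝ h x (e y) = h y := by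
  obtain ⟨s, hs⟩ := hsub
  set A := fderiv ℝ h x
  let Φ : E → E := fun y => y + s (h y - A y)
  have hhx : ContDiffAt ℝ 1 h x := hh.contDiffAt (hU.mem_nhds hx)
  have hΦ : ContDiffAt ℝ 1 Φ x :=
    contDiffAt_id.add (s.contDiff.contDiffAt.comp x (hhx.sub A.contDiff.contDiffAt))
  have hΦ' : HasFDerivAt Φ (ContinuousLinearEquiv.refl ℝ E : E →L[ℝ] E) x := by
    have hA : HasFDerivAt h A x := (hhx.differentiableAt one_ne_zero).hasFDerivAt
    convert! (hasFDerivAt_id (𝕜 := ℝ) x).add (s.hasFDerivAt.comp x (hA.sub A.hasFDerivAt)) using 1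
    ext y
    simp
  let e₀ := hΦ.toOpenPartialHomeomorph Φ hΦ' one_ne_zero
  have hx₀ : x ∈ e₀.source := hΦ.mem_toOpenPartialHomeomorph_source hΦ' one_ne_zero
  let e := (e₀.restrOpen U hU).restrContDiff ℝ 1 (by simp)
  have hsymm' : HasFDerivAt e₀.symm (.id ℝ E) (e₀ x) :=
    e₀.hasFDerivAt_symm (f' := .refl ℝ E) (e₀.map_source hx₀)
      (by rw [e₀.left_inv hx₀]; exact hΦ')
  refine ⟨e, ⟨⟨hx₀, hx⟩, hΦ, hΦ.to_localInverse hΦ' one_ne_zero⟩, fun y hy => hy.1.2,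
    OpenPartialHomeomorph.contDiffOn_restrContDiff_source ℝ _ _,
    OpenPartialHomeomorph.contDiffOn_restrContDiff_target ℝ _ _, hsymm', fun y => ?_⟩
  change A (y + s (h y - A y)) = h y
  rw [map_add, hs, add_sub_cancel]

lemma tangentSet_zeroSet (hU : IsOpen U) (hh : ContDiffOn ℝ 1 h U) (hx : x ∈ U) (hx0 : h x = 0)
    (hsub : (fderiv ℝ h x).HasRightInverse) :
    tangentSet {y ∈ U | h y = 0} x = {v | fderiv ℝ h x v = 0} := by
  refine (tangentSet_subset_ker ((hh.contDiffAt (hU.mem_nhds hx)).differentiableAt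
    one_ne_zero).hasFDerivAt fun y hy => hy.2).antisymm fun v (hv : fderiv ℝ h x v = 0) => ?_
  obtain ⟨e, hxe, heU, -, hsymm, hsymm', he⟩ := exists_chart_fderiv_comp_eq hU hh hx hsub
  let line : ℝ → E := fun t => e x + t • v
  have hline : ContDiff ℝ 1 line := by fun_prop
  have hline' : HasDerivAt line v 0 := by
    simpa [line] using! ((hasDerivAt_id (0 : ℝ)).smul_const v).const_add (e x)
  have hline0 : line 0 = e x := by simp [line]
  obtain ⟨ε, hε, hball⟩ := Metric.mem_nhds_iff.1 <| hline.continuous.continuousAt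
    (hline0 ▸ e.open_target.mem_nhds (e.map_source hxe))
  rw [Real.ball_eq_Ioo, zero_sub, zero_add] at hball
  refine ⟨e.symm ∘ line, ε, hε, hsymm.comp hline.contDiffOn hball, fun t ht => ?_, ?_, ?_⟩
  · refine ⟨heU (e.map_target (hball ht)), ?_⟩
    change h (e.symm (line t)) = 0
    rw [← he, e.right_inv (hball ht), map_add, map_smul, he, hx0, hv, smul_zero, add_zero]
  · rw [Function.comp_apply, hline0, e.left_inv hxe]
  · rw [← hline0] at hsymm'
    exact (hsymm'.comp_hasDerivAt 0 hline').hasDerivWithinAt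

lemma isC1SubmanifoldCodim_zeroSet [FiniteDimensional ℝ Y] (hU : IsOpen U)
    (hh : ContDiffOn ℝ 1 h U) (hsurj : ∀ x ∈ U, h x = 0 → Function.Surjective (fderiv ℝ h x)) :
    IsC1SubmanifoldCodim {x ∈ U | h x = 0} (Module.finrank ℝ Y) := by
  rintro x ⟨hx, hx0⟩
  set A := fderiv ℝ h x
  have hAsurj : Function.Surjective A := hsurj x hx hx0
  obtain ⟨e, hxe, heU, he₁, hsymm, -, he⟩ := exists_chart_fderiv_comp_eq hU hh hx
    (.of_surjective_of_finiteDimensional hAsurj)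
  obtain ⟨Q, hQ⟩ := Submodule.exists_isCompl A.ker
  have hQdim : Module.finrank ℝ Q = Module.finrank ℝ Y :=
    (Submodule.quotientEquivOfIsCompl A.ker Q hQ).symm.finrank_eq.trans
      (A.toLinearMap.quotKerEquivOfSurjective hAsurj).finrank_eq
  have himage : e '' e.source = e.target := e.image_source_eq_target
  refine ⟨e.source, e, A.ker, Q, e.open_source, hxe, A.isClosed_ker, hQ, hQdim,
    himage ▸ e.open_target, himage ▸ ⟨he₁, e.injOn, himage, e.symm, hsymm, e.invOn⟩, ?_⟩
  have hker (y : E) : e y ∈ A.ker ↔ h y = 0 := by rw [LinearMap.mem_ker]; exact he y ▸ Iff.rfl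
  ext z
  constructor
  · rintro ⟨y, ⟨⟨-, hy0⟩, hye⟩, rfl⟩
    exact ⟨(hker y).2 hy0, y, hye, rfl⟩
  · rintro ⟨hz, y, hye, rfl⟩
    exact ⟨y, ⟨⟨heU hye, (hker y).1 hz⟩, hye⟩, rfl⟩

end ZeroSet

section CurveOfOperators

variable {G : Type*} [NormedAddCommGroup G] [NormedSpace ℝ G]
variable {E : Type*} [NormedAddCommGroup E] [NormedSpace ℝ E]
variable {T : ℝ → G →L[ℝ] E} {T' : G → ℝ → E}

lemma hasFDerivAt_uncurry_of_hasDerivAt_apply (hT : Continuous T)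
    (hT' : Continuous fun q : G × ℝ => T' q.1 q.2)
    (hderiv : ∀ x t, HasDerivAt (fun s => T s x) (T' x t) t) (q : G × ℝ) :
    HasFDerivAt (fun p : G × ℝ => T p.2 p.1)
      ((T q.2).coprod (.toSpanSingleton ℝ (T' q.1 q.2))) q :=
  (hasStrictFDerivAt_uncurry_coprod (𝕜 := ℝ) (f := fun x t => T t x) (f₁ := fun _ t => T t)
    (f₂ := fun x t => .toSpanSingleton ℝ (T' x t))
    (.of_forall fun p => (T p.2).hasFDerivAt (x := p.1))
    (.of_forall fun p => (hderiv p.1 p.2).hasFDerivAt) (hT.comp continuous_snd).continuousAt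
    ((ContinuousLinearMap.toSpanSingletonCLE (𝕜 := ℝ)).continuous.comp hT').continuousAt
    ).hasFDerivAt

lemma contDiff_uncurry_of_hasDerivAt_apply (hT : Continuous T)
    (hT' : Continuous fun q : G × ℝ => T' q.1 q.2)
    (hderiv : ∀ x t, HasDerivAt (fun s => T s x) (T' x t) t) :
    ContDiff ℝ 1 fun q : G × ℝ => T q.2 q.1 := by
  refine contDiff_one_iff_hasFDerivAt.2
    ⟨_, ?_, hasFDerivAt_uncurry_of_hasDerivAt_apply hT hT' hderiv⟩
  have hsnd : Continuous fun q : G × ℝ => ContinuousLinearMap.toSpanSingleton ℝ (T' q.1 q.2) :=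
    (ContinuousLinearMap.toSpanSingletonCLE (𝕜 := ℝ)).continuous.comp hT'
  exact (((hT.comp continuous_snd).clm_comp continuous_const).add
    (hsnd.clm_comp continuous_const)).congr fun q =>
      ContinuousLinearMap.comp_fst_add_comp_snd _ _

end CurveOfOperators

section Primitive

variable {a b : ℝ}

lemma continuous_uncurry_IccExtend {X : Type*} [TopologicalSpace X] (h : a ≤ b) :
    Continuous fun p : C(Icc a b, X) × ℝ => IccExtend h p.1 p.2 := by
  change Continuous fun p : C(Icc a b, X) × ℝ => p.1 (projIcc a b h p.2)
  fun_prop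

variable {E : Type*} [NormedAddCommGroup E] [NormedSpace ℝ E]

/-- The primitive at `t` with base point `t₀` of a continuous function on `[a, b]`, extended to `ℝ`
by its boundary values, as a continuous linear map of the function. -/
def primitiveCLM (h : a ≤ b) (t₀ t : ℝ) : C(Icc a b, E) →L[ℝ] E :=
  LinearMap.mkContinuous
    { toFun := fun f => ∫ s in t₀..t, IccExtend h f s
      map_add' := fun f g => intervalIntegral.integral_add
        (f.continuous.Icc_extend'.intervalIntegrable _ _)
        (g.continuous.Icc_extend'.intervalIntegrable _ _)
      map_smul' := fun c f => intervalIntegral.integral_smul c (IccExtend h f) }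
    |t - t₀| fun f => by
      rw [mul_comm]
      exact intervalIntegral.norm_integral_le_of_norm_le_const fun s _ => f.norm_coe_le_norm _

lemma norm_primitiveCLM_le (h : a ≤ b) (t₀ t : ℝ) :
    ‖(primitiveCLM h t₀ t : C(Icc a b, E) →L[ℝ] E)‖ ≤ |t - t₀| :=
  LinearMap.mkContinuous_norm_le _ (abs_nonneg _) _

lemma primitiveCLM_sub_primitiveCLM (h : a ≤ b) (t₀ t t' : ℝ) :
    (primitiveCLM h t₀ t - primitiveCLM h t₀ t' : C(Icc a b, E) →L[ℝ] E) =
      primitiveCLM h t' t := by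
  ext f
  exact intervalIntegral.integral_interval_sub_left
    (f.continuous.Icc_extend'.intervalIntegrable _ _)
    (f.continuous.Icc_extend'.intervalIntegrable _ _)

lemma continuous_primitiveCLM (h : a ≤ b) (t₀ : ℝ) :
    Continuous fun t => (primitiveCLM h t₀ t : C(Icc a b, E) →L[ℝ] E) := by
  have hlip : LipschitzWith 1 fun t => (primitiveCLM h t₀ t : C(Icc a b, E) →L[ℝ] E) :=
    .of_dist_le_mul fun t t' => by
      rw [dist_eq_norm, primitiveCLM_sub_primitiveCLM, NNReal.coe_one, one_mul, Real.dist_eq]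
      exact norm_primitiveCLM_le h t' t
  exact hlip.continuous

lemma hasDerivAt_primitiveCLM [CompleteSpace E] (h : a ≤ b) (t₀ t : ℝ) (f : C(Icc a b, E)) :
    HasDerivAt (fun s => primitiveCLM h t₀ s f) (IccExtend h f t) t :=
  (f.continuous.Icc_extend'.integral_hasStrictDerivAt t₀ t).hasDerivAt

end Primitive

section ContinuouslyDifferentiable

open Topology

lemma extFun_of_mem {X : Type*} [TopologicalSpace X] [Zero X] (φ : C(Icc0 r, X)) {t : ℝ}
    (ht : t ∈ Icc0 r) : extFun φ t = φ ⟨t, ht⟩ :=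
  dif_pos ht

lemma extFun_eq_IccExtend {X : Type*} [TopologicalSpace X] [Zero X] (hr : -r ≤ 0)
    (φ : C(Icc0 r, X)) {t : ℝ} (ht : t ∈ Icc0 r) : extFun φ t = IccExtend hr φ t := by
  rw [extFun_of_mem φ ht, IccExtend_of_mem hr φ ht]

variable {E : Type*} [NormedAddCommGroup E] [NormedSpace ℝ E]

/-- The continuous linear map `φ ↦ φ'(0)` on `C¹([-r,0],E)`. -/
def derivZeroCLM (hr : -r ≤ 0) : C1 r E →L[ℝ] E :=
  ContinuousMap.evalCLM ℝ ⟨0, hr, le_rfl⟩ ∘L .snd ℝ _ _ ∘L (C1sub r E).subtypeL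

lemma derivZeroCLM_apply (hr : -r ≤ 0) (φ : C1 r E) : derivZeroCLM hr φ = dvC φ 0 :=
  (extFun_of_mem φ.1.2 ⟨hr, le_rfl⟩).symm

/-- The value at `t` of the pair `(φ, φ')`, read as `φ(0) + ∫₀ᵗ φ'`. Unlike `evC` it makes sense for
all `t ∈ ℝ` and all pairs of continuous functions, so that it can be differentiated in `t`. -/
def extEvC (hr : -r ≤ 0) (t : ℝ) : C(Icc0 r, E) × C(Icc0 r, E) →L[ℝ] E :=
  (ContinuousMap.evalCLM ℝ ⟨0, hr, le_rfl⟩).coprod (primitiveCLM hr 0 t)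

lemma extEvC_apply (hr : -r ≤ 0) (t : ℝ) (p : C(Icc0 r, E) × C(Icc0 r, E)) :
    extEvC hr t p = p.1 ⟨0, hr, le_rfl⟩ + ∫ s in 0..t, IccExtend hr p.2 s :=
  rfl

lemma continuous_extEvC (hr : -r ≤ 0) :
    Continuous fun t => (extEvC hr t : C(Icc0 r, E) × C(Icc0 r, E) →L[ℝ] E) := by
  have hprim := continuous_primitiveCLM (E := E) hr 0
  exact (continuous_const.add (hprim.clm_comp continuous_const)).congr fun t =>
    ContinuousLinearMap.comp_fst_add_comp_snd _ _

variable [CompleteSpace E]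

lemma hasDerivAt_extEvC (hr : -r ≤ 0) (p : C(Icc0 r, E) × C(Icc0 r, E)) (t : ℝ) :
    HasDerivAt (fun s => extEvC hr s p) (IccExtend hr p.2 t) t :=
  (hasDerivAt_primitiveCLM hr 0 t p.2).const_add _

lemma hasFDerivAt_uncurry_extEvC (hr : -r ≤ 0) (q : (C(Icc0 r, E) × C(Icc0 r, E)) × ℝ) :
    HasFDerivAt (fun q : (C(Icc0 r, E) × C(Icc0 r, E)) × ℝ => extEvC hr q.2 q.1)
      ((extEvC hr q.2).coprod (.toSpanSingleton ℝ (IccExtend hr q.1.2 q.2))) q :=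
  hasFDerivAt_uncurry_of_hasDerivAt_apply (continuous_extEvC hr)
    ((continuous_uncurry_IccExtend hr).comp (by fun_prop :
      Continuous fun q : (C(Icc0 r, E) × C(Icc0 r, E)) × ℝ => (q.1.2, q.2)))
    (hasDerivAt_extEvC hr) q

lemma contDiff_uncurry_extEvC (hr : -r ≤ 0) :
    ContDiff ℝ 1 fun q : (C(Icc0 r, E) × C(Icc0 r, E)) × ℝ => extEvC hr q.2 q.1 :=
  contDiff_uncurry_of_hasDerivAt_apply (continuous_extEvC hr)
    ((continuous_uncurry_IccExtend hr).comp (by fun_prop :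
      Continuous fun q : (C(Icc0 r, E) × C(Icc0 r, E)) × ℝ => (q.1.2, q.2)))
    (hasDerivAt_extEvC hr)

lemma evC_eq_extEvC (hr : -r ≤ 0) (φ : C1 r E) {t : ℝ} (ht : t ∈ Icc0 r) :
    evC φ t = extEvC hr t φ.1 := by
  have hcont : ContinuousOn (extFun φ.1.1) (Icc t 0) := fun s hs =>
    ((φ.2 s ⟨ht.1.trans hs.1, hs.2⟩).continuousWithinAt).mono (Icc_subset_Icc_left ht.1)
  have hderiv (s : ℝ) (hs : s ∈ Ioo t 0) :
      HasDerivAt (extFun φ.1.1) (IccExtend hr φ.1.2 s) s := by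
    have hs' : s ∈ Icc0 r := ⟨ht.1.trans hs.1.le, hs.2.le⟩
    rw [← extFun_eq_IccExtend hr φ.1.2 hs']
    exact (φ.2 s hs').hasDerivAt (Icc_mem_nhds (ht.1.trans_lt hs.1) hs.2)
  have hftc := intervalIntegral.integral_eq_sub_of_hasDerivAt_of_le ht.2 hcont hderiv
    (φ.1.2.continuous.Icc_extend'.intervalIntegrable _ _)
  rw [extEvC_apply, intervalIntegral.integral_symm, hftc, neg_sub,
    ← extFun_of_mem φ.1.1 ⟨hr, le_rfl⟩, add_sub_cancel]
  rfl

lemma mem_C1sub_iff (hr : -r ≤ 0) {p : C(Icc0 r, E) × C(Icc0 r, E)} :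
    p ∈ C1sub r E ↔ ∀ t : Icc0 r, extEvC hr t p = p.1 t := by
  constructor
  · rintro hp ⟨t, ht⟩
    rw [← evC_eq_extEvC hr ⟨p, hp⟩ ht]
    exact extFun_of_mem p.1 ht
  · intro h t ht
    have heq (s : ℝ) (hs : s ∈ Icc0 r) : extFun p.1 s = extEvC hr s p := by
      rw [extFun_of_mem p.1 hs, h ⟨s, hs⟩]
    rw [extFun_eq_IccExtend hr p.2 ht]
    exact (hasDerivAt_extEvC hr p t).hasDerivWithinAt.congr heq (heq t ht)

lemma isClosed_C1sub (hr : -r ≤ 0) :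
    IsClosed (C1sub r E : Set (C(Icc0 r, E) × C(Icc0 r, E))) := by
  have heq : (C1sub r E : Set (C(Icc0 r, E) × C(Icc0 r, E))) =
      ⋂ t : Icc0 r, {p | extEvC hr t p = p.1 t} := by
    ext p
    rw [mem_iInter]
    exact mem_C1sub_iff hr
  rw [heq]
  exact isClosed_iInter fun t => isClosed_eq (extEvC hr t).continuous (by fun_prop)

lemma completeSpace_C1 (hr : -r ≤ 0) : CompleteSpace (C1 r E) :=
  (isClosed_C1sub hr).completeSpace_coe

lemma contDiffOn_evC_comp (hr : -r ≤ 0) {s : Set (C1 r E)} {τ : C1 r E → ℝ}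
    (hτ : ContDiffOn ℝ 1 τ s) (hmem : ∀ φ ∈ s, τ φ ∈ Icc0 r) :
    ContDiffOn ℝ 1 (fun φ => evC φ (τ φ)) s := by
  have hpair : ContDiffOn ℝ 1 (fun φ : C1 r E => (φ.1, τ φ)) s :=
    (C1sub r E).subtypeL.contDiff.contDiffOn.prodMk hτ
  exact ((contDiff_uncurry_extEvC hr).comp_contDiffOn hpair).congr fun φ hφ =>
    evC_eq_extEvC hr φ (hmem φ hφ)

lemma hasFDerivAt_evC_comp (hr : -r ≤ 0) {φ : C1 r E} {τ : C1 r E → ℝ} {τ' : C1 r E →L[ℝ] ℝ}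
    (hτ : HasFDerivAt τ τ' φ) (hmem : ∀ᶠ ψ in 𝓝 φ, τ ψ ∈ Icc0 r) :
    HasFDerivAt (fun ψ => evC ψ (τ ψ))
      (extEvC hr (τ φ) ∘L (C1sub r E).subtypeL + τ'.smulRight (dvC φ (τ φ))) φ := by
  have hpair : HasFDerivAt (fun ψ : C1 r E => (ψ.1, τ ψ)) ((C1sub r E).subtypeL.prod τ') φ :=
    HasFDerivAt.prodMk (𝕜 := ℝ) (E := C1 r E) (F := C(Icc0 r, E) × C(Icc0 r, E)) (G := ℝ)
      (C1sub r E).subtypeL.hasFDerivAt hτ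
  have hext := HasFDerivAt.comp (𝕜 := ℝ) (E := C1 r E) (F := (C(Icc0 r, E) × C(Icc0 r, E)) × ℝ) φ
    (hasFDerivAt_uncurry_extEvC hr (φ.1, τ φ)) hpair
  rw [dvC, extFun_eq_IccExtend hr φ.1.2 hmem.self_of_nhds]
  refine HasFDerivAt.congr_of_eventuallyEq ?_ (hmem.mono fun ψ hψ => evC_eq_extEvC hr ψ hψ)
  convert! hext using 1

end ContinuouslyDifferentiable

section Correction

variable {E : Type*} [NormedAddCommGroup E] [NormedSpace ℝ E]

/-- The restriction to `[-r,0]` of a continuously differentiable function on `ℝ`, as an element of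
`C¹([-r,0],E)`. -/
def C1.ofHasDerivAt {f f' : ℝ → E} (hf : ∀ t, HasDerivAt f (f' t) t) (hf' : Continuous f') :
    C1 r E :=
  ⟨(⟨fun t => f t, (continuous_iff_continuousAt.2 fun t => (hf t).continuousAt).comp
      continuous_subtype_val⟩, ⟨fun t => f' t, hf'.comp continuous_subtype_val⟩), fun t ht => by
    have heq (s : ℝ) (hs : s ∈ Icc0 r) := extFun_of_mem (r := r) ⟨fun t => f t,
      (continuous_iff_continuousAt.2 fun t => (hf t).continuousAt).comp continuous_subtype_val⟩ hs
    rw [extFun_of_mem _ ht]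
    exact (hf t).hasDerivWithinAt.congr heq (heq t ht)⟩

lemma exists_norm_lt_dvC_zero_eq (hr : -r ≤ 0) (v : E) {ε : ℝ} (hε : 0 < ε) :
    ∃ χ : C1 r E, ‖χ.1.1‖ < ε ∧ dvC χ 0 = v := by
  obtain ⟨c, hc⟩ := exists_gt (‖v‖ / ε)
  have hc0 : 0 < c := lt_of_le_of_lt (by positivity) hc
  have hderiv (t : ℝ) :
      HasDerivAt (fun t => (Real.sin (c * t) / c) • v) (Real.cos (c * t) • v) t := by
    have hsin := (((hasDerivAt_id t).const_mul c).sin.div_const c).smul_const v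
    simpa only [id, mul_one, mul_div_cancel_right₀ _ hc0.ne'] using hsin
  refine ⟨C1.ofHasDerivAt hderiv (by fun_prop), ?_, ?_⟩
  · refine (ContinuousMap.norm_lt_iff _ hε).2 fun t => ?_
    calc ‖(Real.sin (c * t) / c) • v‖ = |Real.sin (c * t)| * (‖v‖ / c) := by
          rw [norm_smul, norm_div, Real.norm_eq_abs, Real.norm_of_nonneg hc0.le]; ring
      _ ≤ 1 * (‖v‖ / c) := by gcongr; exact Real.abs_sin_le_one _
      _ < ε := by rwa [one_mul, div_lt_comm₀ hc0 hε]
  · refine (extFun_of_mem _ ⟨hr, le_rfl⟩).trans ?_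
    change Real.cos (c * 0) • v = v
    rw [mul_zero, Real.cos_zero, one_smul]

lemma zero_prodMk_mem_closure_range_dvC_zero (hr : -r ≤ 0) (v : E) :
    ((0, v) : C(Icc0 r, E) × E) ∈ closure (range fun χ : C1 r E => (χ.1.1, dvC χ 0)) := by
  refine Metric.mem_closure_range_iff.2 fun ε hε => ?_
  obtain ⟨χ, hχ, rfl⟩ := exists_norm_lt_dvC_zero_eq hr v hε
  exact ⟨χ, by simpa [Prod.dist_eq, hε] using hχ⟩

variable [FiniteDimensional ℝ E]
variable {G : Type*} [NormedAddCommGroup G] [NormedSpace ℝ G] [FiniteDimensional ℝ G]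

-- `(0, v)` is in the closure of the range of `χ ↦ (T χ, χ'(0))`, and this range is closed since
-- `G × E` is finite-dimensional.
lemma exists_map_eq_zero_dvC_zero_eq (hr : -r ≤ 0) (T : C(Icc0 r, E) →L[ℝ] G) (v : E) :
    ∃ χ : C1 r E, T χ.1.1 = 0 ∧ dvC χ 0 = v := by
  let P : C1 r E →L[ℝ] G × E := (T ∘L .fst ℝ _ _ ∘L (C1sub r E).subtypeL).prod (derivZeroCLM hr)
  have hP (χ : C1 r E) : P χ = (T χ.1.1, dvC χ 0) := congrArg _ (derivZeroCLM_apply hr χ)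
  have hclosure : Prod.map T id (0, v) ∈ closure (range P) :=
    map_mem_closure (T.continuous.prodMap continuous_id)
      (zero_prodMk_mem_closure_range_dvC_zero hr v) (by rintro _ ⟨χ, rfl⟩; exact ⟨χ, hP χ⟩)
  have hclosed : IsClosed (range P) := P.range.closed_of_finiteDimensional
  obtain ⟨χ, hχ⟩ := hclosed.closure_subset hclosure
  rw [hP, Prod.map_apply, map_zero, id, Prod.mk.injEq] at hχ
  exact ⟨χ, hχ⟩

end Correction

lemma map_eq_sum_sum_smul_single {ι κ R M : Type*} [Fintype ι] [Fintype κ] [DecidableEq ι]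
    [DecidableEq κ] [Semiring R] [AddCommMonoid M] [Module R M] (A : (ι → κ → R) →ₗ[R] M)
    (u : ι → κ → R) : A u = ∑ k, ∑ ν, u k ν • A (Pi.single k (Pi.single ν 1)) := by
  have hrow (k : ι) :
      A (Pi.single k (u k)) = ∑ ν, u k ν • A (Pi.single k (Pi.single ν 1)) := by
    conv_lhs => rw [pi_eq_sum_univ' (u k)]
    exact (map_sum (A ∘ₗ LinearMap.single R _ k) _ _).trans
      (Finset.sum_congr rfl fun ν _ => map_smul (A ∘ₗ LinearMap.single R _ k) _ _)
  simp only [← hrow, ← map_sum, Finset.univ_sum_single]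

namespace Setting

variable (S : Setting r n kk F)

section

omit [FiniteDimensional ℝ F]

/-- `Lof` as a continuous linear map. -/
def LofCLM : C1 r (Fin n → ℝ) →L[ℝ] F :=
  S.L ∘L .fst ℝ _ _ ∘L (C1sub r (Fin n → ℝ)).subtypeL

lemma LofCLM_apply (φ : C1 r (Fin n → ℝ)) : S.LofCLM φ = S.Lof φ :=
  rfl

lemma neg_d_mem_Icc0 (k : Fin kk) {w : F} (hw : w ∈ S.W) : -S.d k w ∈ Icc0 r :=
  ⟨neg_le_neg (S.d_mem k w hw).2, neg_nonpos.2 (S.d_mem k w hw).1⟩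

lemma isOpen_setOf_Lof_mem_W : IsOpen {φ | S.Lof φ ∈ S.W} :=
  S.Wopen.preimage S.LofCLM.continuous

lemma contDiffOn_d_comp_Lof (k : Fin kk) :
    ContDiffOn ℝ 1 (fun φ => S.d k (S.Lof φ)) {φ | S.Lof φ ∈ S.W} := by
  have hL : ContDiff ℝ 1 S.LofCLM :=
    ContinuousLinearMap.contDiff (𝕜 := ℝ) (E := C1 r (Fin n → ℝ)) (F := F) (n := 1) S.LofCLM
  exact (S.d_smooth k).comp hL.contDiffOn fun _ hφ => hφ

lemma contDiffOn_hat (hr : -r ≤ 0) : ContDiffOn ℝ 1 S.hat {φ | S.Lof φ ∈ S.W} :=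
  contDiffOn_pi.2 fun k => contDiffOn_evC_comp hr (S.contDiffOn_d_comp_Lof k).neg
    fun _ hφ => S.neg_d_mem_Icc0 k hφ

lemma isOpen_U (hr : -r ≤ 0) : IsOpen S.U :=
  (S.contDiffOn_hat hr).continuousOn.isOpen_inter_preimage S.isOpen_setOf_Lof_mem_W S.Vopen

lemma hasFDerivAt_hat (hr : -r ≤ 0) {φ : C1 r (Fin n → ℝ)} (hφ : S.Lof φ ∈ S.W) :
    HasFDerivAt S.hat (fderiv ℝ S.hat φ) φ :=
  (((S.contDiffOn_hat hr).contDiffAt (S.isOpen_setOf_Lof_mem_W.mem_nhds hφ)).differentiableAt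
    one_ne_zero).hasFDerivAt

lemma fderiv_hat_apply (hr : -r ≤ 0) {φ : C1 r (Fin n → ℝ)} (hφ : S.Lof φ ∈ S.W)
    (χ : C1 r (Fin n → ℝ)) (k : Fin kk) :
    fderiv ℝ S.hat φ χ k = evC χ (-S.d k (S.Lof φ)) -
      fderivWithin ℝ (S.d k) S.W (S.Lof φ) (S.Lof χ) • dvC φ (-S.d k (S.Lof φ)) := by
  have hd : HasFDerivAt (S.d k) (fderivWithin ℝ (S.d k) S.W (S.Lof φ)) (S.Lof φ) :=
    (((S.d_smooth k).differentiableOn one_ne_zero) _ hφ).hasFDerivWithinAt.hasFDerivAt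
      (S.Wopen.mem_nhds hφ)
  have hL : HasFDerivAt S.Lof S.LofCLM φ := S.LofCLM.hasFDerivAt
  have hev : HasFDerivAt (fun ψ => S.hat ψ k) _ φ :=
    hasFDerivAt_evC_comp hr (hd.comp φ hL).neg <| Filter.eventually_of_mem
      (S.isOpen_setOf_Lof_mem_W.mem_nhds hφ) fun ψ hψ => S.neg_d_mem_Icc0 k hψ
  have hcoord : HasFDerivAt (fun ψ => S.hat ψ k) (.proj k ∘L fderiv ℝ S.hat φ) φ :=
    (hasFDerivAt_pi' (𝕜 := ℝ) (E := C1 r (Fin n → ℝ)) (F' := fun _ : Fin kk => Fin n → ℝ)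
      (Φ := S.hat)).1 (S.hasFDerivAt_hat hr hφ) k
  have huniq := hcoord.unique hev
  rw [evC_eq_extEvC hr χ (S.neg_d_mem_Icc0 k hφ), sub_eq_add_neg, ← neg_smul]
  exact DFunLike.congr_fun huniq χ

/-- The function `φ ↦ φ'(0) - f(φ)`, whose zero set in `U` is the solution manifold `X_f`. -/
def defect (φ : C1 r (Fin n → ℝ)) : Fin n → ℝ := dvC φ 0 - S.fmap φ

lemma Xf_eq_zeroSet_defect : S.Xf = {φ ∈ S.U | S.defect φ = 0} := by
  ext φ
  exact and_congr_right fun _ => sub_eq_zero.symm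

lemma defect_eq (hr : -r ≤ 0) : S.defect = fun φ => derivZeroCLM hr φ - S.g (S.hat φ) :=
  funext fun φ => by rw [derivZeroCLM_apply]; rfl

lemma contDiffOn_defect (hr : -r ≤ 0) : ContDiffOn ℝ 1 S.defect S.U := by
  have hg : ContDiffOn ℝ 1 (S.g ∘ S.hat) S.U :=
    S.g_smooth.comp ((S.contDiffOn_hat hr).mono fun _ hφ => hφ.1) fun _ hφ => hφ.2
  rw [S.defect_eq hr]
  exact (derivZeroCLM hr).contDiff.contDiffOn.sub hg

lemma fderiv_defect_apply (hr : -r ≤ 0) {φ : C1 r (Fin n → ℝ)} (hφ : φ ∈ S.U)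
    (χ : C1 r (Fin n → ℝ)) :
    fderiv ℝ S.defect φ χ =
      dvC χ 0 - fderivWithin ℝ S.g S.V (S.hat φ) (fderiv ℝ S.hat φ χ) := by
  have hg : HasFDerivAt S.g (fderivWithin ℝ S.g S.V (S.hat φ)) (S.hat φ) :=
    ((S.g_smooth.differentiableOn one_ne_zero) _ hφ.2).hasFDerivWithinAt.hasFDerivAt
      (S.Vopen.mem_nhds hφ.2)
  have hdefect : HasFDerivAt S.defect
      (derivZeroCLM hr - fderivWithin ℝ S.g S.V (S.hat φ) ∘L fderiv ℝ S.hat φ) φ := by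
    rw [S.defect_eq hr]
    exact (derivZeroCLM hr).hasFDerivAt.sub (hg.comp φ (S.hasFDerivAt_hat hr hφ.1))
  rw [hdefect.fderiv, ← derivZeroCLM_apply hr]
  rfl

lemma dFormula_eq_fderivWithin_g (hr : -r ≤ 0) {φ : C1 r (Fin n → ℝ)} (hφ : S.Lof φ ∈ S.W)
    (χ : C1 r (Fin n → ℝ)) (μ : Fin n) :
    S.dFormula φ χ μ = fderivWithin ℝ S.g S.V (S.hat φ) (fderiv ℝ S.hat φ χ) μ := by
  have hsum := map_eq_sum_sum_smul_single
    (.proj μ ∘ₗ (fderivWithin ℝ S.g S.V (S.hat φ)).toLinearMap) (fderiv ℝ S.hat φ χ)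
  refine Eq.trans ?_ hsum.symm
  refine Finset.sum_congr rfl fun k _ => Finset.sum_congr rfl fun ν _ => ?_
  rw [S.fderiv_hat_apply hr hφ, Pi.sub_apply, Pi.smul_apply, smul_eq_mul, smul_eq_mul, mul_comm,
    mul_comm (dvC φ _ ν)]
  rfl

lemma fderiv_defect_eq_zero_iff (hr : -r ≤ 0) {φ : C1 r (Fin n → ℝ)} (hφ : φ ∈ S.U)
    (χ : C1 r (Fin n → ℝ)) :
    fderiv ℝ S.defect φ χ = 0 ↔ ∀ μ, dvC χ 0 μ = S.dFormula φ χ μ := by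
  simp only [S.fderiv_defect_apply hr hφ, sub_eq_zero, funext_iff,
    S.dFormula_eq_fderivWithin_g hr hφ.1]

end

lemma exists_Lof_eq_zero_evC_eq_zero_dvC_zero_eq (hr : -r ≤ 0) {w : F} (hw : w ∈ S.W)
    (v : Fin n → ℝ) :
    ∃ χ : C1 r (Fin n → ℝ), S.Lof χ = 0 ∧ (∀ k, evC χ (-S.d k w) = 0) ∧ dvC χ 0 = v := by
  let δ (k : Fin kk) : C(Icc0 r, Fin n → ℝ) →L[ℝ] (Fin n → ℝ) :=
    ContinuousMap.evalCLM ℝ ⟨-S.d k w, S.neg_d_mem_Icc0 k hw⟩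
  obtain ⟨χ, hχ, hχv⟩ := exists_map_eq_zero_dvC_zero_eq hr (S.L.prod (.pi δ)) v
  refine ⟨χ, congrArg Prod.fst hχ, fun k => ?_, hχv⟩
  rw [evC, extFun_of_mem _ (S.neg_d_mem_Icc0 k hw)]
  exact congrFun (congrArg Prod.snd hχ) k

lemma surjective_fderiv_defect (hr : -r ≤ 0) {φ : C1 r (Fin n → ℝ)} (hφ : φ ∈ S.U) :
    Function.Surjective (fderiv ℝ S.defect φ) := fun v => by
  obtain ⟨χ, hL, hev, hdv⟩ := S.exists_Lof_eq_zero_evC_eq_zero_dvC_zero_eq hr hφ.1 v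
  have hhat : fderiv ℝ S.hat φ χ = 0 := funext fun k => by
    rw [S.fderiv_hat_apply hr hφ.1, hL, hev, map_zero, zero_smul, sub_zero, Pi.zero_apply]
  exact ⟨χ, by rw [S.fderiv_defect_apply hr hφ, hhat, hdv, map_zero, sub_zero]⟩

lemma exists_mem_Xf_Lof_eq (hr : -r ≤ 0) {φ : C1 r (Fin n → ℝ)} (hφ : φ ∈ S.U) :
    ∃ ψ ∈ S.Xf, S.Lof ψ = S.Lof φ := by
  obtain ⟨χ, hLχ, hev, hdv⟩ :=
    S.exists_Lof_eq_zero_evC_eq_zero_dvC_zero_eq hr hφ.1 (S.fmap φ - dvC φ 0)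
  have hL : S.Lof (φ + χ) = S.Lof φ := by
    rw [← LofCLM_apply, map_add, LofCLM_apply, LofCLM_apply, hLχ, add_zero]
  have hhat : S.hat (φ + χ) = S.hat φ := funext fun k => by
    change extFun (φ.1.1 + χ.1.1) (-S.d k (S.Lof (φ + χ))) = _
    rw [hL, extFun_add]
    exact add_eq_left.2 (hev k)
  have hdv' : dvC (φ + χ) 0 = S.fmap φ := by
    rw [← derivZeroCLM_apply hr, map_add, derivZeroCLM_apply, derivZeroCLM_apply, hdv,
      add_sub_cancel]
  exact ⟨φ + χ, ⟨⟨hL ▸ hφ.1, hhat ▸ hφ.2⟩, by rw [hdv', fmap, fmap, hhat]⟩, hL⟩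

end Setting

/-- Proposition 2.3: each `X_{fJ}` with `U_J ≠ ∅` is nonempty, `X_f ≠ ∅` is a continuously
differentiable submanifold of codimension `n` of `C¹`, and the tangent spaces are as stated. -/
theorem statement2 (hr : 0 < r) (S : Setting r n kk F) (hV : S.U.Nonempty) :
    (∀ J : Finset (Fin kk), (S.UJ J).Nonempty → (S.XfJ J).Nonempty) ∧
    S.Xf.Nonempty ∧ IsC1SubmanifoldCodim S.Xf n ∧
    (∀ φ ∈ S.Xf, tangentSet S.Xf φ =
      {χ : C1 r (Fin n → ℝ) | ∀ μ : Fin n, dvC χ 0 μ = S.dFormula φ χ μ}) := by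
  have hr₀ : -r ≤ 0 := by linarith
  have : CompleteSpace (C1 r (Fin n → ℝ)) := completeSpace_C1 hr₀
  refine ⟨?_, ?_, ?_, fun φ hφ => ?_⟩
  · rintro J ⟨φ, hφU, hφJ⟩
    obtain ⟨ψ, hψ, hL⟩ := S.exists_mem_Xf_Lof_eq hr₀ hφU
    exact ⟨ψ, hψ, hψ.1, hL ▸ hφJ⟩
  · obtain ⟨φ, hφ⟩ := hV
    obtain ⟨ψ, hψ, -⟩ := S.exists_mem_Xf_Lof_eq hr₀ hφ
    exact ⟨ψ, hψ⟩
  · have hcodim := isC1SubmanifoldCodim_zeroSet (S.isOpen_U hr₀) (S.contDiffOn_defect hr₀)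
      fun φ hφ _ => S.surjective_fderiv_defect hr₀ hφ
    rwa [← S.Xf_eq_zeroSet_defect, Module.finrank_fin_fun] at hcodim
  · have hφ₀ := hφ
    rw [S.Xf_eq_zeroSet_defect] at hφ₀ ⊢
    refine (tangentSet_zeroSet (S.isOpen_U hr₀) (S.contDiffOn_defect hr₀) hφ₀.1 hφ₀.2
      (.of_surjective_of_finiteDimensional (S.surjective_fderiv_defect hr₀ hφ₀.1))).trans ?_
    ext χ
    exact S.fderiv_defect_eq_zero_iff hr₀ hφ₀.1 χ
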